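/- arXiv:math/0701149 — 5 statements merged into one kernel-verified Lean document; each statement's English description precedes it below -/
import Mathlib

section
/- For every positive integer n, there is a bijection between the set of odd divisors of n and the set of decompositions of n. -/
/-- `IsDecomp n a m` means the `m` consecutive positive integers
`a+1, a+2, …, a+m` form a decomposition of `n` (a nonempty finite sequence of
consecutive positive integers summing to `n`, of length `m`). -/
def IsDecomp (n a m : ℕ) : Prop :=
  1 ≤ m ∧ (Finset.range m).sum (fun i => a + i + 1) = n

theorem decomp_iff (n a m : ℕ) : IsDecomp n a m ↔ 1 ≤ m ∧ m * (2 * a + m + 1) = 2 * n := by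
  have h : ∀ m : ℕ, 2 * (Finset.range m).sum (fun i => a + i + 1) = m * (2 * a + m + 1) := by
    intro m
    induction m with
    | zero => simp
    | succ k ih => rw [Finset.sum_range_succ, mul_add, ih]; ring
  unfold IsDecomp
  rw [← h m]
  constructor
  · rintro ⟨h1, h2⟩; exact ⟨h1, by rw [h2]⟩
  · rintro ⟨h1, h2⟩; exact ⟨h1, by omega⟩

def oddPart (p : ℕ × ℕ) : ℕ := if p.2 % 2 = 1 then p.2 else 2 * p.1 + p.2 + 1

theorem oddPart_spec (n : ℕ) (p : ℕ × ℕ) (h : IsDecomp n p.1 p.2) :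
    oddPart p ∣ n ∧ Odd (oddPart p) := by
  obtain ⟨a, m⟩ := p
  rw [decomp_iff] at h
  obtain ⟨h1, h2⟩ := h
  have ho : Odd (oddPart (a, m)) := by
    rw [Nat.odd_iff]; unfold oddPart; dsimp only; split_ifs <;> omega
  refine ⟨?_, ho⟩
  have hd : oddPart (a, m) ∣ 2 * n := by
    rw [← h2]; unfold oddPart; dsimp only; split_ifs
    · exact Dvd.intro _ rfl
    · exact Dvd.intro_left _ rfl
  exact (Nat.Coprime.dvd_of_dvd_mul_left (Nat.coprime_two_right.mpr ho) hd)

/-- For every positive integer `n`, there is a bijection between the set of odd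
divisors of `n` and the set of decompositions of `n`. -/
theorem oddDivisors_equiv_decompositions (n : ℕ) (hn : 0 < n) :
    Nonempty ({k : ℕ // k ∣ n ∧ Odd k} ≃ {p : ℕ × ℕ // IsDecomp n p.1 p.2}) := by
  refine ⟨(Equiv.ofBijective (fun p : {p : ℕ × ℕ // IsDecomp n p.1 p.2} =>
    (⟨oddPart p.1, oddPart_spec n p.1 p.2⟩ : {k : ℕ // k ∣ n ∧ Odd k})) ⟨?_, ?_⟩).symm⟩
  · rintro ⟨⟨a, m⟩, h⟩ ⟨⟨b, l⟩, h'⟩ he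
    have he : oddPart (a, m) = oddPart (b, l) := congrArg Subtype.val he
    rw [decomp_iff] at h h'
    obtain ⟨h1, h2⟩ := h
    obtain ⟨h3, h4⟩ := h'
    dsimp only at h1 h2 h3 h4
    have key : a = b ∧ m = l := by
      unfold oddPart at he
      dsimp only at he
      split_ifs at he
      · subst he
        have := Nat.eq_of_mul_eq_mul_left h1 (h2.trans h4.symm)
        omega
      · rw [← he, mul_comm l] at h4
        have := Nat.eq_of_mul_eq_mul_left h1 (h2.trans h4.symm)
        omega
      · rw [he, mul_comm m] at h2
        have := Nat.eq_of_mul_eq_mul_left h3 (h2.trans h4.symm)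
        omega
      · rw [he] at h2
        have := Nat.eq_of_mul_eq_mul_right (by omega) (h2.trans h4.symm)
        omega
    obtain ⟨rfl, rfl⟩ := key
    rfl
  · rintro ⟨k, ⟨c, hc⟩, hk⟩
    have hk2 := Nat.odd_iff.mp hk
    have hc0 : 0 < c := by
      rcases Nat.eq_zero_or_pos c with h | h
      · subst h; omega
      · exact h
    by_cases hlt : k < 2 * c
    · refine ⟨⟨((2 * c - k - 1) / 2, k), ?_⟩, ?_⟩
      · rw [decomp_iff]
        dsimp only
        refine ⟨by omega, ?_⟩
        have e : 2 * ((2 * c - k - 1) / 2) + k + 1 = 2 * c := by omega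
        rw [e, hc]; ring
      · apply Subtype.ext
        simp [oddPart, hk2]
    · refine ⟨⟨((k - 2 * c - 1) / 2, 2 * c), ?_⟩, ?_⟩
      · rw [decomp_iff]
        dsimp only
        refine ⟨by omega, ?_⟩
        have e : 2 * ((k - 2 * c - 1) / 2) + 2 * c + 1 = k := by omega
        rw [e, hc]; ring
      · apply Subtype.ext
        simp only [oddPart]
        split_ifs <;> omega
end

section
/- Let n be a positive integer and k an odd divisor of n with k^2 < 2n. Then the k consecutive integers n/k - (k-1)/2, n/k - (k-1)/2 + 1, ..., n/k + (k-1)/2 are all positive and their sum is n; thus they form a decomposition of n of odd length k. -/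
theorem two_mul_sum_consecutive (a : ℤ) (j : ℕ) :
    2 * (Finset.range j).sum (fun i => a + (i : ℤ)) = j * (2 * a + j - 1) := by
  induction j with
  | zero => simp
  | succ j ih =>
    rw [Finset.sum_range_succ, mul_add, ih]
    push_cast
    ring

/-- Let `n` be a positive integer and `k` an odd divisor of `n` with `k² < 2n`.
Then the `k` consecutive integers `n/k - (k-1)/2 + i`, for `0 ≤ i < k`, are all
positive and their sum is `n`; thus they form a decomposition of `n` of odd
length `k`. -/
theorem odd_decomposition_of_small_odd_divisor (n k : ℕ) (hn : 0 < n)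
    (hk : Odd k) (hdvd : k ∣ n) (hlt : k ^ 2 < 2 * n) :
    (∀ i ∈ Finset.range k, 0 < ((n / k : ℕ) : ℤ) - ((k - 1) / 2 : ℕ) + i) ∧
      (Finset.range k).sum (fun i => ((n / k : ℕ) : ℤ) - ((k - 1) / 2 : ℕ) + i) = n ∧
      Odd k := by
  refine ⟨?_, ?_, hk⟩
  all_goals
    obtain ⟨m, rfl⟩ := hk
    obtain ⟨q, rfl⟩ := hdvd
    have h1 : (2 * m + 1) * q / (2 * m + 1) = q := Nat.mul_div_cancel_left q (by omega)
    have h2 : (2 * m + 1 - 1) / 2 = m := by omega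
    rw [h1, h2]
  · have h3 : 2 * m + 1 < 2 * q := by
      by_contra h
      push Not at h
      nlinarith
    intro i _
    omega
  · have h := two_mul_sum_consecutive ((q : ℤ) - m) (2 * m + 1)
    push_cast at h ⊢
    linarith
end

section
/- Let n be a positive integer and k an odd divisor of n with k^2 > 2n. Then the 2n/k consecutive integers (k-1)/2 - n/k + 1, (k-1)/2 - n/k + 2, ..., (k-1)/2 + n/k are all positive and their sum is n; thus they form a decomposition of n of even length 2n/k. -/
/-- Let `n` be a positive integer and `k` an odd divisor of `n` with `k² > 2n`.
Then the `2n/k` consecutive integers `(k-1)/2 - n/k + 1 + i`, for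
`0 ≤ i < 2n/k`, are all positive and their sum is `n`; thus they form a
decomposition of `n` of even length `2n/k`. -/
theorem even_decomposition_of_large_odd_divisor (n k : ℕ) (hn : 0 < n)
    (hk : Odd k) (hdvd : k ∣ n) (hgt : 2 * n < k ^ 2) :
    (∀ i ∈ Finset.range (2 * n / k),
        0 < (((k - 1) / 2 : ℕ) : ℤ) - ((n / k : ℕ) : ℤ) + 1 + i) ∧
      (Finset.range (2 * n / k)).sum
          (fun i => (((k - 1) / 2 : ℕ) : ℤ) - ((n / k : ℕ) : ℤ) + 1 + i) = n ∧
      Even (2 * n / k) := by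
  obtain ⟨m, rfl⟩ := hk
  obtain ⟨q, rfl⟩ := hdvd
  have h1 : (2 * m + 1) * q / (2 * m + 1) = q := Nat.mul_div_cancel_left _ (by omega)
  have h2 : 2 * ((2 * m + 1) * q) / (2 * m + 1) = 2 * q := by
    rw [show 2 * ((2 * m + 1) * q) = (2 * m + 1) * (2 * q) by ring]
    exact Nat.mul_div_cancel_left _ (by omega)
  have h3 : (2 * m + 1 - 1) / 2 = m := by omega
  have h4 : q ≤ m := by
    by_contra h
    have h5 : m + 1 ≤ q := by omega
    nlinarith
  rw [h1, h2, h3]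
  refine ⟨fun i _ => by omega, ?_, even_two_mul q⟩
  have key : ∀ (c : ℤ) (r : ℕ), (Finset.range (2 * r)).sum (fun i => c + (i : ℤ))
      = 2 * r * c + r * (2 * r - 1) := by
    intro c r
    induction r with
    | zero => simp
    | succ r ih =>
      rw [show 2 * (r + 1) = 2 * r + 1 + 1 by ring, Finset.sum_range_succ,
        Finset.sum_range_succ, ih]
      push_cast
      ring
  rw [key]
  push_cast
  ring
end

section
/- For every positive integer n, the number of decompositions of n equals the product, over all odd primes p dividing n, of (e_p + 1), where e_p is the exponent of p in the prime factorization of n. -/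
lemma decomp_sum (a m : ℕ) :
    2 * (Finset.range m).sum (fun i => a + i + 1) = m * (2 * a + m + 1) := by
  induction m with
  | zero => simp
  | succ k ih => rw [Finset.sum_range_succ, mul_add, ih]; ring

lemma isDecomp_iff (n a m : ℕ) (hn : 0 < n) :
    IsDecomp n a m ↔ m * (2 * a + m + 1) = 2 * n := by
  unfold IsDecomp
  have h := decomp_sum a m
  constructor
  · rintro ⟨_, h2⟩
    rw [← h, h2]
  · intro h2
    refine ⟨?_, by omega⟩
    rcases Nat.eq_zero_or_pos m with h0 | h0
    · subst h0; omega
    · exact h0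

lemma decomp_card (n : ℕ) (hn : 0 < n) :
    {p : ℕ × ℕ | IsDecomp n p.1 p.2}.ncard = (n.divisors.filter (fun d => Odd d)).card := by
  rw [← Set.ncard_coe_finset]
  apply Set.ncard_congr (fun p _ => if Odd p.2 then p.2 else 2 * p.1 + p.2 + 1)
  · rintro ⟨a, m⟩ h
    simp only [Set.mem_setOf_eq, isDecomp_iff _ _ _ hn] at h
    simp only [Finset.coe_filter, Nat.mem_divisors, Set.mem_setOf_eq]
    have key : ∀ d, Odd d → d ∣ 2 * n → (d ∣ n ∧ n ≠ 0) ∧ Odd d := fun d hd h =>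
      ⟨⟨(Nat.Coprime.dvd_of_dvd_mul_left (Nat.coprime_two_right.mpr hd) h), hn.ne'⟩, hd⟩
    split_ifs with hm
    · exact key _ hm ⟨_, h.symm⟩
    · refine key _ ?_ ⟨m, by rw [← h, mul_comm]⟩
      rw [Nat.not_odd_iff_even] at hm
      grind
  · rintro ⟨a, m⟩ ⟨b, k⟩ h1 h2 h
    simp only [Set.mem_setOf_eq, isDecomp_iff _ _ _ hn] at h1 h2
    have hm : 0 < m := by
      rcases Nat.eq_zero_or_pos m with h0 | h0
      · subst h0; omega
      · exact h0
    have hk : 0 < k := by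
      rcases Nat.eq_zero_or_pos k with h0 | h0
      · subst h0; omega
      · exact h0
    have e := h1.trans h2.symm
    simp only [Prod.mk.injEq]
    simp only at h
    split_ifs at h with c1 c2 c2
    · subst h
      have := Nat.eq_of_mul_eq_mul_left hm e
      omega
    · rw [← h, mul_comm k] at e
      have := Nat.eq_of_mul_eq_mul_left hm e
      omega
    · rw [h, mul_comm m] at e
      have := Nat.eq_of_mul_eq_mul_left hk e
      omega
    · rw [h] at e
      have := Nat.eq_of_mul_eq_mul_right (by omega) e
      omega
  · intro d hd
    simp only [Finset.coe_filter, Nat.mem_divisors, Set.mem_setOf_eq] at hd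
    obtain ⟨⟨⟨c, hc⟩, _⟩, hodd⟩ := hd
    obtain ⟨t, ht⟩ := id hodd
    rcases lt_or_ge d (2 * c) with hlt | hge
    · refine ⟨(c - t - 1, d), ?_, by simp [hodd]⟩
      simp only [Set.mem_setOf_eq, isDecomp_iff _ _ _ hn]
      rw [show 2 * (c - t - 1) + d + 1 = 2 * c by omega, hc]; ring
    · have hne : ¬ Odd (2 * c) := by simp
      refine ⟨(t - c, 2 * c), ?_, ?_⟩
      · simp only [Set.mem_setOf_eq, isDecomp_iff _ _ _ hn]
        rw [show 2 * (t - c) + 2 * c + 1 = d by omega, hc]; ring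
      · simp only [hne, if_false]; omega

lemma odd_divisors (n : ℕ) (hn : 0 < n) :
    n.divisors.filter (fun d => Odd d) = (n / 2 ^ n.factorization 2).divisors := by
  have hn' := hn.ne'
  have hmul := Nat.ordProj_mul_ordCompl_eq_self n 2
  have hpos := Nat.ordCompl_pos 2 hn'
  have hnd := Nat.not_dvd_ordCompl Nat.prime_two hn'
  ext d
  simp only [Finset.mem_filter, Nat.mem_divisors]
  constructor
  · rintro ⟨⟨hd, _⟩, ho⟩
    refine ⟨?_, hpos.ne'⟩
    rw [← hmul] at hd
    exact Nat.Coprime.dvd_of_dvd_mul_left ((Nat.coprime_two_right.mpr ho).pow_right _) hd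
  · rintro ⟨hd, _⟩
    refine ⟨⟨hd.trans (Nat.ordCompl_dvd n 2), hn'⟩, ?_⟩
    rw [← Nat.not_even_iff_odd, even_iff_two_dvd]
    exact fun h => hnd (h.trans hd)

/-- For every positive integer `n`, the number of decompositions of `n` equals
the product, over all odd primes `p` dividing `n`, of `e_p + 1`, where `e_p`
is the exponent of `p` in the prime factorization of `n`. -/
theorem card_decompositions_eq_prod (n : ℕ) (hn : 0 < n) :
    {p : ℕ × ℕ | IsDecomp n p.1 p.2}.ncard =
      (n.primeFactors.filter (fun p => p ≠ 2)).prod (fun p => n.factorization p + 1) := by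
  rw [decomp_card n hn, odd_divisors n hn, Nat.card_divisors (Nat.ordCompl_pos 2 hn.ne').ne']
  have hf := Nat.factorization_ordCompl n 2
  have hs : (n / 2 ^ n.factorization 2).primeFactors = n.primeFactors.filter (fun p => p ≠ 2) := by
    rw [← Nat.support_factorization, hf, Finsupp.support_erase, Nat.support_factorization]
    ext p
    simp [and_comm]
  rw [hs]
  refine Finset.prod_congr rfl fun p hp => ?_
  rw [hf, Finsupp.erase_ne (Finset.mem_filter.mp hp).2]
end

section
/- Let n be a positive integer and d the 2-adic valuation of n. Then every even element of the length spectrum of n has 2-adic valuation exactly d+1. -/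
/-- The length spectrum of `n`: the set of lengths of decompositions of `n`. -/
def Lspec (n : ℕ) : Set ℕ := {m | ∃ a, IsDecomp n a m}

/-- Let `n` be a positive integer and `d` the 2-adic valuation of `n`. Then
every even element of the length spectrum of `n` has 2-adic valuation exactly
`d + 1`. -/
theorem even_length_padic_valuation (n : ℕ) (hn : 0 < n) :
    ∀ m ∈ Lspec n, Even m → padicValNat 2 m = padicValNat 2 n + 1 := by
  rintro m ⟨a, hm, hs⟩ ⟨k, rfl⟩
  have key : ∀ m : ℕ, 2 * (Finset.range m).sum (fun i => a + i + 1) = m * (2 * a + m + 1) := by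
    intro m
    induction m with
    | zero => simp
    | succ m ih => rw [Finset.sum_range_succ, mul_add, ih]; ring
  have h := key (k + k)
  rw [hs] at h
  have hn' : n = k * (2 * a + 2 * k + 1) := by
    have : 2 * n = 2 * (k * (2 * a + 2 * k + 1)) := by rw [h]; ring
    omega
  have hk : k ≠ 0 := by omega
  have hodd : padicValNat 2 (2 * a + 2 * k + 1) = 0 :=
    padicValNat.eq_zero_of_not_dvd (by omega)
  rw [hn', padicValNat.mul hk (by omega), hodd, ← two_mul,
    padicValNat.mul (by norm_num) hk, padicValNat.self (by norm_num)]
  omega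
end
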